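/- Let m > n ≥ 2 be integers and let φ : ℝᵐ → ℝⁿ be a non-constant map whose component functions are polynomials, and which is a biharmonic morphism: for every open set U ⊆ ℝⁿ and every smooth biharmonic function f : U → ℝ, the pull-back f ∘ φ : φ⁻¹(U) → ℝ is biharmonic. Then φ is an orthogonal projection followed by a homothety: there exist a real number λ > 0, a vector b ∈ ℝⁿ, and a linear map A : ℝᵐ → ℝⁿ whose composition with its adjoint is the identity of ℝⁿ (A ∘ A* = id, i.e. A is a co-isometry, an orthogonal projection up to identification), such that φ(x) = λ·A(x) + b for all x ∈ ℝᵐ. -/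

import Mathlib

/-- The Euclidean Laplacian `Δf = Σᵢ ∂²f/∂xᵢ²` of a function on `ℝᵐ`. -/
noncomputable def laplacian {m : ℕ} (f : EuclideanSpace ℝ (Fin m) → ℝ)
    (x : EuclideanSpace ℝ (Fin m)) : ℝ :=
  ∑ i : Fin m, fderiv ℝ (fun y => fderiv ℝ f y (EuclideanSpace.single i 1)) x
      (EuclideanSpace.single i 1)

/-!
Testing the morphism against `yᵢ ^ 2` shows that the square of each component is biharmonic. If `p`
is a nonzero polynomial of degree `d`, then `Δ ^ d (p ^ 2)` is positive: by the Leibniz rule it is a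
sum of nonnegative terms, among them the squares of the derivatives of `p` of order `d`. So `d ≤ 1`,
and `φ` is an affine map `x ↦ L x + b`. Since `Δ (Δ (⟪v, y⟫ ^ 4)) = 24 * ‖v‖ ^ 4`, the quartic
`‖v‖ ^ 4 * ⟪u, y⟫ ^ 4 - ‖u‖ ^ 4 * ⟪v, y⟫ ^ 4` is biharmonic, and pulling it back by `φ` gives
`‖v‖ * ‖L† u‖ = ‖u‖ * ‖L† v‖`: the adjoint `L†` is a multiple of an isometry.
-/

open MvPolynomial Matrix ContinuousLinearMap

section PartialDerivatives

variable {σ R : Type*} [CommSemiring R]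

theorem pderiv_pderiv_comm (i j : σ) (p : MvPolynomial σ R) :
    pderiv i (pderiv j p) = pderiv j (pderiv i p) := by
  classical
  ext s
  simp only [coeff_pderiv, add_right_comm s, Finsupp.add_apply, Finsupp.single_apply]
  rcases eq_or_ne i j with rfl | hij
  · rfl
  · simp [hij, hij.symm, mul_right_comm]

theorem totalDegree_pderiv_le (i : σ) (p : MvPolynomial σ R) :
    (pderiv i p).totalDegree ≤ p.totalDegree - 1 := by
  refine Finset.sup_le fun s hs ↦ Nat.le_sub_of_add_le ?_
  rw [mem_support_iff, coeff_pderiv] at hs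
  have hdeg := le_totalDegree (mem_support_iff.mpr (left_ne_zero_of_mul hs))
  change (s + Finsupp.single i 1).degree ≤ _ at hdeg
  rwa [map_add, Finsupp.degree_single] at hdeg

theorem pderiv_eq_zero_of_totalDegree_eq_zero {p : MvPolynomial σ R} (hp : p.totalDegree = 0)
    (i : σ) : pderiv i p = 0 := by
  rw [totalDegree_eq_zero_iff_eq_C.mp hp, pderiv_C]

theorem exists_totalDegree_pderiv_add_one_eq [NoZeroDivisors R] [CharZero R]
    {p : MvPolynomial σ R} (hp : p.totalDegree ≠ 0) :
    ∃ i, pderiv i p ≠ 0 ∧ (pderiv i p).totalDegree + 1 = p.totalDegree := by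
  have hsupp : p.support.Nonempty := by
    rw [Finset.nonempty_iff_ne_empty, Ne, support_eq_empty]
    rintro rfl
    exact hp totalDegree_zero
  obtain ⟨s, hs, hdeg : p.totalDegree = s.degree⟩ :=
    Finset.exists_mem_eq_sup _ hsupp fun s ↦ s.sum fun _ e ↦ e
  obtain ⟨i, hi⟩ : ∃ i, s i ≠ 0 := by
    by_contra! h
    exact hp (hdeg.trans ((Finsupp.degree_eq_zero_iff s).mpr (Finsupp.ext h)))
  have hcancel := Finsupp.sub_add_single_one_cancel hi
  have hmem : s - Finsupp.single i 1 ∈ (pderiv i p).support := by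
    rw [mem_support_iff, coeff_pderiv, hcancel]
    exact mul_ne_zero (mem_support_iff.mp hs) (Nat.cast_add_one_ne_zero _)
  have hle : (s - Finsupp.single i 1).degree ≤ (pderiv i p).totalDegree := le_totalDegree hmem
  have hdeg' := congrArg Finsupp.degree hcancel
  rw [map_add, Finsupp.degree_single] at hdeg'
  have hge := totalDegree_pderiv_le i p
  exact ⟨i, support_nonempty.mp ⟨_, hmem⟩, by lia⟩

end PartialDerivatives

section AffineForm

variable {σ τ R : Type*} [Fintype σ]

/-- The polynomial `v ⬝ᵥ X + c` of degree at most one with gradient `v` and constant term `c`. -/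
noncomputable def affineForm [CommSemiring R] (v : σ → R) (c : R) : MvPolynomial σ R :=
  ∑ i, C (v i) * X i + C c

section CommSemiring

variable [CommSemiring R]

theorem eval_affineForm (v : σ → R) (c : R) (x : σ → R) :
    eval x (affineForm v c) = v ⬝ᵥ x + c := by
  simp [affineForm, dotProduct]

theorem pderiv_affineForm (i : σ) (v : σ → R) (c : R) :
    pderiv i (affineForm v c) = C (v i) := by
  classical
  simp [affineForm, pderiv_X, Pi.single_apply]

theorem affineForm_single_zero [DecidableEq σ] (i : σ) :
    affineForm (Pi.single i 1) 0 = (X i : MvPolynomial σ R) := by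
  simp [affineForm, Pi.single_apply]

theorem bind₁_affineForm [Fintype τ] (a : Matrix τ σ R) (b u : τ → R) (c : R) :
    bind₁ (fun j ↦ affineForm (a j) (b j)) (affineForm u c) =
      affineForm (u ᵥ* a) (u ⬝ᵥ b + c) := by
  simp only [affineForm, map_add, map_sum, map_mul, bind₁_C_right, bind₁_X_right, mul_add,
    Finset.mul_sum, Finset.sum_add_distrib, vecMul, dotProduct, Finset.sum_mul, mul_assoc,
    add_assoc]
  rw [Finset.sum_comm]

end CommSemiring

theorem exists_eq_affineForm_of_totalDegree_le_one [CommRing R] [NoZeroDivisors R]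
    [CharZero R] {p : MvPolynomial σ R} (hp : p.totalDegree ≤ 1) : ∃ v c, p = affineForm v c := by
  have hgrad (i : σ) : pderiv i p = C (coeff 0 (pderiv i p)) :=
    totalDegree_eq_zero_iff_eq_C.mp (by have := totalDegree_pderiv_le i p; lia)
  set v : σ → R := fun i ↦ coeff 0 (pderiv i p)
  have hconst : (p - affineForm v 0).totalDegree = 0 := by
    by_contra h
    obtain ⟨i, hi, -⟩ := exists_totalDegree_pderiv_add_one_eq h
    exact hi (by rw [map_sub, pderiv_affineForm, hgrad i, sub_self])
  refine ⟨v, coeff 0 (p - affineForm v 0), ?_⟩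
  rw [affineForm, ← totalDegree_eq_zero_iff_eq_C.mp hconst, affineForm, C_0, add_zero,
    add_sub_cancel]

end AffineForm

section PolyLaplacian

variable {σ R : Type*} [Fintype σ]

/-- The Laplacian `∑ i, ∂²/∂Xᵢ²` on polynomials, as a linear endomorphism so that its iterates are
available as powers. -/
noncomputable def polyLaplacian [CommSemiring R] : Module.End R (MvPolynomial σ R) :=
  ∑ i, (pderiv i).toLinearMap ∘ₗ (pderiv i).toLinearMap

local notation "Δ" => polyLaplacian

section CommSemiring

variable [CommSemiring R]

theorem polyLaplacian_apply (p : MvPolynomial σ R) : Δ p = ∑ i, pderiv i (pderiv i p) := by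
  simp [polyLaplacian]

theorem polyLaplacian_C (c : R) : Δ (C c : MvPolynomial σ R) = 0 := by
  simp [polyLaplacian_apply]

theorem polyLaplacian_mul (p q : MvPolynomial σ R) :
    Δ (p * q) = Δ p * q + p * Δ q + (2 : R) • ∑ i, pderiv i p * pderiv i q := by
  simp only [polyLaplacian_apply, pderiv_mul, map_add, Finset.sum_mul, Finset.mul_sum,
    Finset.smul_sum, ← Finset.sum_add_distrib, two_smul]
  exact Finset.sum_congr rfl fun i _ ↦ by ring

theorem pderiv_polyLaplacian_pow (i : σ) (k : ℕ) (p : MvPolynomial σ R) :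
    pderiv i ((Δ ^ k) p) = (Δ ^ k) (pderiv i p) := by
  have hcomm (q : MvPolynomial σ R) : pderiv i (Δ q) = Δ (pderiv i q) := by
    simp only [polyLaplacian_apply, map_sum, pderiv_pderiv_comm i]
  induction k generalizing p with
  | zero => rfl
  | succ k ih => rw [pow_succ, Module.End.mul_apply, ih, hcomm, Module.End.mul_apply]

theorem totalDegree_polyLaplacian_le (p : MvPolynomial σ R) :
    (Δ p).totalDegree ≤ p.totalDegree - 2 := by
  rw [polyLaplacian_apply]
  refine totalDegree_finsetSum_le fun i _ ↦ (totalDegree_pderiv_le i _).trans ?_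
  have := totalDegree_pderiv_le i p
  lia

theorem polyLaplacian_pow_eq_zero_of_totalDegree_lt {k : ℕ} {p : MvPolynomial σ R}
    (hp : p.totalDegree < 2 * k) : (Δ ^ k) p = 0 := by
  induction k generalizing p with
  | zero => lia
  | succ k ih =>
    rw [pow_succ, Module.End.mul_apply]
    have hdeg := totalDegree_polyLaplacian_le p
    rcases k.eq_zero_or_pos with rfl | hk
    · have hpderiv (i : σ) : (pderiv i p).totalDegree = 0 := by
        have := totalDegree_pderiv_le i p
        lia
      simp [polyLaplacian_apply, pderiv_eq_zero_of_totalDegree_eq_zero (hpderiv _)]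
    · exact ih (by lia)

theorem polyLaplacian_affineForm_pow (v : σ → R) (c : R) (k : ℕ) :
    Δ (affineForm v c ^ (k + 2)) = ((k + 2) * (k + 1) * (v ⬝ᵥ v)) • affineForm v c ^ k := by
  have hterm (i : σ) : pderiv i (pderiv i (affineForm v c ^ (k + 2))) =
      C ((k + 2) * (k + 1) : R) * C (v i * v i) * affineForm v c ^ k := by
    simp only [pderiv_pow, pderiv_mul, pderiv_affineForm, pderiv_C, Derivation.map_natCast,
      Nat.add_sub_cancel, Nat.add_succ_sub_one, C_mul, map_add, map_natCast, map_ofNat, map_one]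
    push_cast
    ring
  simp only [polyLaplacian_apply, hterm, ← Finset.sum_mul, ← Finset.mul_sum, ← map_sum, ← C_mul,
    smul_eq_C_mul, dotProduct]

theorem polyLaplacian_polyLaplacian_affineForm_sq (v : σ → R) (c : R) :
    Δ (Δ (affineForm v c ^ 2)) = 0 := by
  rw [polyLaplacian_affineForm_pow v c 0, pow_zero, map_smul, ← C_1, polyLaplacian_C, smul_zero]

theorem polyLaplacian_polyLaplacian_affineForm_pow_four (v : σ → R) (c : R) :
    Δ (Δ (affineForm v c ^ 4)) = C (24 * (v ⬝ᵥ v) ^ 2) := by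
  rw [polyLaplacian_affineForm_pow v c 2, map_smul, polyLaplacian_affineForm_pow v c 0, pow_zero,
    smul_smul, smul_eq_C_mul, mul_one]
  congr 1
  push_cast
  ring

end CommSemiring

theorem polyLaplacian_polyLaplacian_smul_affineForm_pow_four_sub [CommRing R] (r s : R)
    (v w : σ → R) (c d : R) :
    Δ (Δ (r • affineForm v c ^ 4 - s • affineForm w d ^ 4)) =
      C (24 * (r * (v ⬝ᵥ v) ^ 2 - s * (w ⬝ᵥ w) ^ 2)) := by
  rw [map_sub, map_sub, map_smul, map_smul, map_smul, map_smul,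
    polyLaplacian_polyLaplacian_affineForm_pow_four,
    polyLaplacian_polyLaplacian_affineForm_pow_four, smul_eq_C_mul, smul_eq_C_mul, ← C_mul,
    ← C_mul, ← C_sub]
  congr 1
  ring

section Ordered

variable [CommRing R] [LinearOrder R] [IsStrictOrderedRing R]

/- Besides gradient terms, the Leibniz rule for `Δ` applied to `p * (Δ ^ j) p` produces only
`Δ p * (Δ ^ j) p` and `p * (Δ ^ (j + 1)) p`, again pairs of this shape, so the induction closes. -/
theorem eval_polyLaplacian_pow_mul_nonneg {k j : ℕ} {p : MvPolynomial σ R}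
    (hp : p.totalDegree ≤ k + j) (x : σ → R) :
    0 ≤ eval x ((Δ ^ k) (p * (Δ ^ j) p)) := by
  induction k generalizing j p with
  | zero =>
    rcases j.eq_zero_or_pos with rfl | hj
    · simpa using mul_self_nonneg (eval x p)
    · simp [polyLaplacian_pow_eq_zero_of_totalDegree_lt (show p.totalDegree < 2 * j by lia)]
  | succ k ih =>
    rw [pow_succ, Module.End.mul_apply, polyLaplacian_mul]
    simp only [map_add, map_smul, map_sum, smul_eval]
    refine add_nonneg (add_nonneg ?_ ?_)
      (mul_nonneg zero_le_two (Finset.sum_nonneg fun i _ ↦ ?_))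
    · cases j with
      | zero =>
        rw [pow_zero, Module.End.one_apply, mul_comm]
        simpa using ih (j := 1) hp
      | succ j =>
        rw [pow_succ, Module.End.mul_apply]
        exact ih (by have := totalDegree_polyLaplacian_le p; lia)
    · rw [← Module.End.mul_apply, ← pow_succ']
      exact ih (by lia)
    · rw [pderiv_polyLaplacian_pow]
      exact ih (by have := totalDegree_pderiv_le i p; lia)

theorem eval_polyLaplacian_pow_totalDegree_mul_self_pos {p : MvPolynomial σ R} (hp : p ≠ 0)
    (x : σ → R) : 0 < eval x ((Δ ^ p.totalDegree) (p * p)) := by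
  generalize hk : p.totalDegree = k
  induction k generalizing p with
  | zero =>
    obtain ⟨c, rfl⟩ : ∃ c, p = C c := ⟨_, totalDegree_eq_zero_iff_eq_C.mp hk⟩
    simpa using mul_self_pos.mpr fun hc : c = 0 ↦ hp (by rw [hc, C_0])
  | succ k ih =>
    obtain ⟨i, hi, hdeg⟩ := exists_totalDegree_pderiv_add_one_eq (p := p) (by lia)
    rw [pow_succ, Module.End.mul_apply, polyLaplacian_mul, mul_comm (Δ p) p]
    simp only [map_add, map_smul, map_sum, smul_eval]
    have hmul : 0 ≤ eval x ((Δ ^ k) (p * Δ p)) := by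
      simpa using eval_polyLaplacian_pow_mul_nonneg (k := k) (j := 1) hk.le x
    have hgrad (l : σ) : 0 ≤ eval x ((Δ ^ k) (pderiv l p * pderiv l p)) := by
      have := totalDegree_pderiv_le l p
      simpa using eval_polyLaplacian_pow_mul_nonneg (k := k) (j := 0) (p := pderiv l p) (by lia) x
    have hsum : 0 < ∑ l, eval x ((Δ ^ k) (pderiv l p * pderiv l p)) :=
      Finset.sum_pos' (fun l _ ↦ hgrad l) ⟨i, Finset.mem_univ i, ih hi (by lia)⟩
    linarith

theorem totalDegree_le_one_of_polyLaplacian_polyLaplacian_sq_eq_zero {p : MvPolynomial σ R}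
    (hp : Δ (Δ (p ^ 2)) = 0) : p.totalDegree ≤ 1 := by
  by_contra! hdeg
  have hp₀ : p ≠ 0 := fun h ↦ by simp [h] at hdeg
  obtain ⟨k, hk⟩ := Nat.exists_eq_add_of_le' (show 2 ≤ p.totalDegree from hdeg)
  have hpos := eval_polyLaplacian_pow_totalDegree_mul_self_pos hp₀ 0
  rw [hk, pow_add, Module.End.mul_apply, ← pow_two, pow_two Δ, Module.End.mul_apply, hp, map_zero,
    map_zero] at hpos
  exact hpos.false

end Ordered

section BiharmonicMorphism

variable {τ : Type*} [Fintype τ]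

/-- Substituting the components `p` preserves biharmonic polynomials: the algebraic counterpart of
being a biharmonic morphism, for the map `R^σ → R^τ` given by `p`. -/
def IsPolyBiharmonicMorphism [CommSemiring R] (p : τ → MvPolynomial σ R) : Prop :=
  ∀ q : MvPolynomial τ R, Δ (Δ q) = 0 → Δ (Δ (bind₁ p q)) = 0

theorem IsPolyBiharmonicMorphism.exists_eq_affineForm [CommRing R] [LinearOrder R]
    [IsStrictOrderedRing R] {p : τ → MvPolynomial σ R} (hp : IsPolyBiharmonicMorphism p) :
    ∃ (a : Matrix τ σ R) (b : τ → R), p = fun j ↦ affineForm (a j) (b j) := by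
  classical
  have hdeg (j : τ) : (p j).totalDegree ≤ 1 := by
    refine totalDegree_le_one_of_polyLaplacian_polyLaplacian_sq_eq_zero ?_
    have hX : Δ (Δ ((X j : MvPolynomial τ R) ^ 2)) = 0 := by
      rw [← affineForm_single_zero, polyLaplacian_polyLaplacian_affineForm_sq]
    simpa using hp _ hX
  choose a b hab using fun j ↦ exists_eq_affineForm_of_totalDegree_le_one (hdeg j)
  exact ⟨a, b, funext hab⟩

theorem IsPolyBiharmonicMorphism.dotProduct_vecMul_sq_mul_eq [CommRing R] [NoZeroDivisors R]
    [CharZero R] {a : Matrix τ σ R} {b : τ → R}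
    (hp : IsPolyBiharmonicMorphism fun j ↦ affineForm (a j) (b j)) (u v : τ → R) :
    (v ⬝ᵥ v) ^ 2 * ((u ᵥ* a) ⬝ᵥ (u ᵥ* a)) ^ 2 =
      (u ⬝ᵥ u) ^ 2 * ((v ᵥ* a) ⬝ᵥ (v ᵥ* a)) ^ 2 := by
  have hquartic := hp ((v ⬝ᵥ v) ^ 2 • affineForm u 0 ^ 4 - (u ⬝ᵥ u) ^ 2 • affineForm v 0 ^ 4) (by
    rw [polyLaplacian_polyLaplacian_smul_affineForm_pow_four_sub, mul_comm ((v ⬝ᵥ v) ^ 2),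
      sub_self, mul_zero, C_0])
  rw [map_sub, map_smul, map_smul, map_pow, map_pow, bind₁_affineForm, bind₁_affineForm,
    polyLaplacian_polyLaplacian_smul_affineForm_pow_four_sub, C_eq_zero] at hquartic
  exact sub_eq_zero.mp ((mul_eq_zero.mp hquartic).resolve_left (by norm_num))

end BiharmonicMorphism

end PolyLaplacian

section EuclideanSpace

variable {ι κ : Type*}

theorem contDiff_mvPolynomial_eval [Fintype ι] {k : WithTop ℕ∞} (p : MvPolynomial ι ℝ) :
    ContDiff ℝ k fun x : EuclideanSpace ℝ ι ↦ eval (fun j ↦ x j) p := by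
  have hproj (j : ι) : ContDiff ℝ k fun x : EuclideanSpace ℝ ι ↦ x j := by fun_prop
  induction p using MvPolynomial.induction_on with
  | C c => simpa using contDiff_const
  | add p q hp hq => simpa using hp.add hq
  | mul_X p j hp => simpa using hp.mul (hproj j)

theorem fderiv_mvPolynomial_eval_single [Finite ι] [DecidableEq ι] (p : MvPolynomial ι ℝ)
    (x : EuclideanSpace ℝ ι) (i : ι) :
    fderiv ℝ (fun y : EuclideanSpace ℝ ι ↦ eval (fun j ↦ y j) p) x (EuclideanSpace.single i 1) =
      eval (fun j ↦ x j) (pderiv i p) := by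
  cases nonempty_fintype ι
  have hdiff (q : MvPolynomial ι ℝ) :
      DifferentiableAt ℝ (fun y : EuclideanSpace ℝ ι ↦ eval (fun j ↦ y j) q) x :=
    (contDiff_mvPolynomial_eval q).differentiable one_ne_zero x
  induction p using MvPolynomial.induction_on with
  | C c => simp
  | add p q hp hq => simp [fderiv_fun_add (hdiff p) (hdiff q), hp, hq]
  | mul_X p k hp =>
    have hproj : HasFDerivAt (fun y : EuclideanSpace ℝ ι ↦ y k)
        (EuclideanSpace.proj k : EuclideanSpace ℝ ι →L[ℝ] ℝ) x :=
      (EuclideanSpace.proj k : EuclideanSpace ℝ ι →L[ℝ] ℝ).hasFDerivAt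
    simp only [map_mul, eval_X, pderiv_mul, pderiv_X, map_add]
    rw [fderiv_fun_mul (hdiff p) hproj.differentiableAt, hproj.fderiv]
    rcases eq_or_ne k i with rfl | hki
    · simp [hp, add_comm, mul_comm]
    · simp [hp, hki, mul_comm]

theorem laplacian_mvPolynomial_eval {m : ℕ} (p : MvPolynomial (Fin m) ℝ) :
    laplacian (fun x : EuclideanSpace ℝ (Fin m) ↦ eval (fun j ↦ x j) p) =
      fun x ↦ eval (fun j ↦ x j) (polyLaplacian p) := by
  funext x
  simp only [laplacian, fderiv_mvPolynomial_eval_single, polyLaplacian_apply, map_sum]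

theorem laplacian_laplacian_mvPolynomial_eval_eq_zero_iff {m : ℕ} (p : MvPolynomial (Fin m) ℝ) :
    (∀ x, laplacian (laplacian fun y : EuclideanSpace ℝ (Fin m) ↦ eval (fun j ↦ y j) p) x = 0) ↔
      polyLaplacian (polyLaplacian p) = 0 := by
  simp only [laplacian_mvPolynomial_eval]
  refine ⟨fun h ↦ MvPolynomial.funext fun x ↦ ?_, fun h x ↦ by rw [h, map_zero]⟩
  simpa using h (WithLp.toLp 2 x)

theorem mvPolynomial_eval_comp {φ : EuclideanSpace ℝ ι → EuclideanSpace ℝ κ}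
    {p : κ → MvPolynomial ι ℝ} (hφ : ∀ i x, φ x i = eval (fun j ↦ x j) (p i))
    (q : MvPolynomial κ ℝ) :
    (fun y : EuclideanSpace ℝ κ ↦ eval (fun j ↦ y j) q) ∘ φ =
      fun x ↦ eval (fun j ↦ x j) (bind₁ p q) := by
  funext x
  simp only [Function.comp_apply, hφ, ← aeval_eq_eval, aeval_bind₁]

variable [Fintype ι] [DecidableEq ι] [Fintype κ]

theorem norm_adjoint_toEuclideanLin_sq (a : Matrix κ ι ℝ) (u : EuclideanSpace ℝ κ) :
    ‖adjoint a.toEuclideanLin.toContinuousLinearMap u‖ ^ 2 =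
      (u.ofLp ᵥ* a) ⬝ᵥ (u.ofLp ᵥ* a) := by
  classical
  rw [← LinearMap.adjoint_toContinuousLinearMap, ← Matrix.toEuclideanLin_conjTranspose_eq_adjoint,
    conjTranspose_eq_transpose_of_trivial, EuclideanSpace.real_norm_sq_eq]
  simp [← mulVec_transpose, dotProduct, sq]

theorem norm_mul_norm_adjoint_toEuclideanLin_eq {a : Matrix κ ι ℝ} {b : κ → ℝ}
    (hp : IsPolyBiharmonicMorphism fun j ↦ affineForm (a j) (b j))
    (u v : EuclideanSpace ℝ κ) :
    ‖v‖ * ‖adjoint a.toEuclideanLin.toContinuousLinearMap u‖ =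
      ‖u‖ * ‖adjoint a.toEuclideanLin.toContinuousLinearMap v‖ := by
  have hnorm (w : EuclideanSpace ℝ κ) : ‖w‖ ^ 2 = w.ofLp ⬝ᵥ w.ofLp := by
    rw [EuclideanSpace.real_norm_sq_eq]
    simp only [dotProduct, sq]
  have h := hp.dotProduct_vecMul_sq_mul_eq u.ofLp v.ofLp
  rw [← norm_adjoint_toEuclideanLin_sq, ← norm_adjoint_toEuclideanLin_sq, ← hnorm, ← hnorm] at h
  refine (pow_left_inj₀ (by positivity) (by positivity) four_ne_zero).mp ?_
  linear_combination h

end EuclideanSpace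

section InnerProductSpace

variable {E F : Type*} [NormedAddCommGroup E] [InnerProductSpace ℝ E] [CompleteSpace E]
  [NormedAddCommGroup F] [InnerProductSpace ℝ F] [CompleteSpace F]

theorem exists_eq_smul_coisometry {L : E →L[ℝ] F} (hL : L ≠ 0)
    (hnorm : ∀ u v, ‖v‖ * ‖adjoint L u‖ = ‖u‖ * ‖adjoint L v‖) :
    ∃ (c : ℝ) (A : E →L[ℝ] F), 0 < c ∧ A ∘L adjoint A = .id ℝ F ∧ L = c • A := by
  obtain ⟨v, hv⟩ : ∃ v, adjoint L v ≠ 0 := by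
    by_contra! h
    exact hL (adjoint.map_eq_zero_iff.mp (ContinuousLinearMap.ext h))
  have hv₀ : v ≠ 0 := by
    rintro rfl
    exact hv (map_zero _)
  have hc : 0 < ‖adjoint L v‖ / ‖v‖ := by positivity
  set c := ‖adjoint L v‖ / ‖v‖
  refine ⟨c, c⁻¹ • L, hc, ?_, (smul_inv_smul₀ hc.ne' L).symm⟩
  have hiso (u : F) : ‖adjoint (c⁻¹ • L) u‖ = ‖u‖ := by
    rw [map_smulₛₗ, _root_.smul_apply, norm_smul, RCLike.conj_to_real,
      norm_inv, Real.norm_of_nonneg hc.le, inv_mul_eq_iff_eq_mul₀ hc.ne', div_mul_eq_mul_div,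
      eq_div_iff (norm_ne_zero_iff.mpr hv₀), mul_comm, hnorm, mul_comm]
  simpa [ContinuousLinearMap.one_def] using (norm_map_iff_adjoint_comp_self _).mp hiso

end InnerProductSpace

theorem isPolyBiharmonicMorphism_of_comp {m n : ℕ}
    {φ : EuclideanSpace ℝ (Fin m) → EuclideanSpace ℝ (Fin n)}
    {p : Fin n → MvPolynomial (Fin m) ℝ} (hp : ∀ i x, φ x i = eval (fun j ↦ x j) (p i))
    (hφ : ∀ q : MvPolynomial (Fin n) ℝ,
      (∀ y, laplacian (laplacian fun z ↦ eval (fun j ↦ z j) q) y = 0) →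
        ∀ x, laplacian (laplacian ((fun z ↦ eval (fun j ↦ z j) q) ∘ φ)) x = 0) :
    IsPolyBiharmonicMorphism p := by
  intro q hq
  rw [← laplacian_laplacian_mvPolynomial_eval_eq_zero_iff] at hq ⊢
  rw [← mvPolynomial_eval_comp hp]
  exact hφ q hq

theorem polynomial_biharmonic_morphism_classification_general (m n : ℕ)
    (φ : EuclideanSpace ℝ (Fin m) → EuclideanSpace ℝ (Fin n))
    (hpoly : ∀ i : Fin n, ∃ p : MvPolynomial (Fin m) ℝ, ∀ x, φ x i = eval (fun j ↦ x j) p)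
    (hnonconst : ∃ x y, φ x ≠ φ y)
    (hmorphism : ∀ q : MvPolynomial (Fin n) ℝ,
      (∀ y, laplacian (laplacian fun z ↦ eval (fun j ↦ z j) q) y = 0) →
        ∀ x, laplacian (laplacian ((fun z ↦ eval (fun j ↦ z j) q) ∘ φ)) x = 0) :
    ∃ (lam : ℝ) (b : EuclideanSpace ℝ (Fin n))
      (A : EuclideanSpace ℝ (Fin m) →L[ℝ] EuclideanSpace ℝ (Fin n)),
      0 < lam ∧
      A.comp (adjoint A) = .id ℝ (EuclideanSpace ℝ (Fin n)) ∧
      ∀ x, φ x = lam • A x + b := by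
  choose p hp using hpoly
  have hmor := isPolyBiharmonicMorphism_of_comp hp hmorphism
  obtain ⟨a, b, rfl⟩ := hmor.exists_eq_affineForm
  set L := (toEuclideanLin a).toContinuousLinearMap
  have hφ (x : EuclideanSpace ℝ (Fin m)) : φ x = L x + WithLp.toLp 2 b := by
    ext i
    simp [hp, eval_affineForm, L, toLpLin_apply, mulVec]
  have hL : L ≠ 0 := by
    obtain ⟨x, y, hxy⟩ := hnonconst
    exact fun h ↦ hxy (by simp [hφ, h])
  obtain ⟨c, A, hc, hA, hLA⟩ :=
    exists_eq_smul_coisometry hL (norm_mul_norm_adjoint_toEuclideanLin_eq hmor)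
  exact ⟨c, WithLp.toLp 2 b, A, hc, hA, fun x ↦ by rw [hφ, hLA, _root_.smul_apply]⟩

/-- A non-constant polynomial biharmonic morphism `φ : ℝᵐ → ℝⁿ`, `m > n ≥ 2`,
is an orthogonal projection followed by a homothety. -/
theorem polynomial_biharmonic_morphism_classification
    (m n : ℕ) (hn : 2 ≤ n) (hmn : n < m)
    (φ : EuclideanSpace ℝ (Fin m) → EuclideanSpace ℝ (Fin n))
    (hpoly : ∀ i : Fin n, ∃ p : MvPolynomial (Fin m) ℝ,
      ∀ x, φ x i = MvPolynomial.eval (fun j => x j) p)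
    (hnonconst : ∃ x y, φ x ≠ φ y)
    (hmorphism : ∀ U : Set (EuclideanSpace ℝ (Fin n)), IsOpen U →
      ∀ f : EuclideanSpace ℝ (Fin n) → ℝ, ContDiffOn ℝ (⊤ : ℕ∞) f U →
        (∀ y ∈ U, laplacian (laplacian f) y = 0) →
        ∀ x ∈ φ ⁻¹' U, laplacian (laplacian (f ∘ φ)) x = 0) :
    ∃ (lam : ℝ) (b : EuclideanSpace ℝ (Fin n))
      (A : EuclideanSpace ℝ (Fin m) →L[ℝ] EuclideanSpace ℝ (Fin n)),
      0 < lam ∧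
      A.comp (ContinuousLinearMap.adjoint A)
          = ContinuousLinearMap.id ℝ (EuclideanSpace ℝ (Fin n)) ∧
      ∀ x, φ x = lam • A x + b := by
  refine polynomial_biharmonic_morphism_classification_general m n φ hpoly hnonconst fun q hq x ↦ ?_
  exact hmorphism Set.univ isOpen_univ _ (contDiff_mvPolynomial_eval q).contDiffOn
    (fun y _ ↦ hq y) x trivial
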